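/- Let γ = 1 − 2π⁻². Then for every α > γ^{−γ}(1−γ)^{γ−1} one has I₀(α) ≥ (1−γ)^{−1}; that is, the function I₀ cannot take values smaller than (1−γ)^{−1}. -/

import Mathlib

open MeasureTheory Set Real

noncomputable section

/-- `f_α(t) = α t^{2γ} − t² − 1`. -/
def fA (γ α t : ℝ) : ℝ := α * t ^ (2 * γ) - t ^ 2 - 1

/-- The derivative `f_α'(t) = 2αγ t^{2γ−1} − 2t`. -/
def fA' (γ α t : ℝ) : ℝ := 2 * α * γ * t ^ (2 * γ - 1) - 2 * t

/-- The second derivative `f_α''(t) = 2αγ(2γ−1) t^{2γ−2} − 2`. -/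
def fA'' (γ α t : ℝ) : ℝ := 2 * α * γ * (2 * γ - 1) * t ^ (2 * γ - 2) - 2

/-- `ψ_α := (f_α')² − 2 f_α f_α''`. -/
def psiA (γ α t : ℝ) : ℝ := (fA' γ α t) ^ 2 - 2 * fA γ α t * fA'' γ α t

/-- The left endpoint `ω⁻_α` of the positivity interval of `f_α`. -/
def omegaMinus (γ α : ℝ) : ℝ := sInf {t : ℝ | 0 < t ∧ 0 < fA γ α t}

/-- The right endpoint `ω⁺_α` of the positivity interval of `f_α`. -/
def omegaPlus (γ α : ℝ) : ℝ := sSup {t : ℝ | 0 < t ∧ 0 < fA γ α t}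

/-- `I₀(α) := ∫_{ω⁻_α}^{ω⁺_α} dt / √(f_α(t))`. -/
def I0 (γ α : ℝ) : ℝ :=
  ∫ t in omegaMinus γ α..omegaPlus γ α, 1 / Real.sqrt (fA γ α t)

/-- On a half-interval `[p, m]` where `f` increases from `0` to its maximum, the function `1 / √f`
is integrable, and a pointwise differential inequality bounds its integral from below. -/
theorem half_integral_lower_bound {f f' : ℝ → ℝ} {p m A k : ℝ} (hpm : p < m)
    (hf : ∀ t ∈ Icc p m, HasDerivAt f (f' t) t) (hf'c : ContinuousOn f' (Icc p m))
    (hp : f p = 0) (hpos : ∀ t ∈ Ico p m, 0 < f' t)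
    (hA : ∀ t ∈ Ioo p m, A * f' t ≤ (2 - k * f' t) * √(f m - f t)) :
    IntervalIntegrable (fun t => 1 / √(f t)) volume p m ∧
      A * (π / 2) + k * √(f m) ≤ ∫ t in p..m, 1 / √(f t) := by
  have hfc : ContinuousOn f (Icc p m) := fun t ht => (hf t ht).continuousAt.continuousWithinAt
  have hmono : StrictMonoOn f (Icc p m) := by
    refine strictMonoOn_of_deriv_pos (convex_Icc p m) hfc fun t ht => ?_
    rw [interior_Icc] at ht
    rw [(hf t (Ioo_subset_Icc_self ht)).deriv]
    exact hpos t (Ioo_subset_Ico_self ht)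
  have hfpos : ∀ t ∈ Ioc p m, 0 < f t := fun t ht => by
    simpa [hp] using hmono (left_mem_Icc.2 hpm.le) (Ioc_subset_Icc_self ht) ht.1
  have hM : 0 < f m := hfpos m ⟨hpm, le_rfl⟩
  have hsqrt : ∀ t ∈ Ioo p m, HasDerivAt (fun s => √(f s)) (f' t / (2 * √(f t))) t :=
    fun t ht => (hf t (Ioo_subset_Icc_self ht)).sqrt (hfpos t (Ioo_subset_Ioc_self ht)).ne'
  obtain ⟨a, hpa, ham⟩ := exists_between hpm
  have hint₁ : IntervalIntegrable (fun t => 1 / √(f t)) volume p a := by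
    have hsub : Icc p a ⊆ Icc p m := Icc_subset_Icc_right ham.le
    have h := intervalIntegral.intervalIntegrable_deriv_of_nonneg (a := p) (b := a)
      (g := fun s => √(f s)) (g' := fun t => f' t / (2 * √(f t)))
      (by rw [uIcc_of_le hpa.le]; exact (hfc.mono hsub).sqrt)
      (by rw [min_eq_left hpa.le, max_eq_right hpa.le]
          exact fun t ht => hsqrt t ⟨ht.1, ht.2.trans ham⟩)
      (by rw [min_eq_left hpa.le, max_eq_right hpa.le]
          exact fun t ht => div_nonneg (hpos t ⟨ht.1.le, ht.2.trans ham⟩).le (by positivity))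
    have hc : ContinuousOn (fun t => 2 / f' t) (uIcc p a) := by
      rw [uIcc_of_le hpa.le]
      exact continuousOn_const.div (hf'c.mono hsub)
        fun t ht => (hpos t ⟨ht.1, ht.2.trans_lt ham⟩).ne'
    refine (h.mul_continuousOn hc).congr fun t ht => ?_
    rw [uIoc_of_le hpa.le] at ht
    have h1 := hpos t ⟨ht.1.le, ht.2.trans_lt ham⟩
    have h2 := Real.sqrt_pos.2 (hfpos t ⟨ht.1, ht.2.trans ham.le⟩)
    field_simp
  have hint₂ : IntervalIntegrable (fun t => 1 / √(f t)) volume a m := by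
    refine ContinuousOn.intervalIntegrable ?_
    rw [uIcc_of_le ham.le]
    exact continuousOn_const.div (hfc.mono (Icc_subset_Icc_left hpa.le)).sqrt
      fun t ht => (Real.sqrt_pos.2 (hfpos t ⟨hpa.trans_le ht.1, ht.2⟩)).ne'
  have hint := hint₁.trans hint₂
  refine ⟨hint, ?_⟩
  have hsM : 0 < √(f m) := Real.sqrt_pos.2 hM
  have key := intervalIntegral.sub_le_integral_of_hasDeriv_right_of_le (a := p) (b := m)
    (g := fun t => A * arcsin (√(f t) / √(f m)) + k * √(f t))
    (g' := fun t => A * (1 / √(1 - (√(f t) / √(f m)) ^ 2) * (f' t / (2 * √(f t)) / √(f m)))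
      + k * (f' t / (2 * √(f t))))
    (φ := fun t => 1 / √(f t)) hpm.le
    (by
      have hs := hfc.sqrt
      exact (continuousOn_const.mul
        (continuous_arcsin.comp_continuousOn (hs.div_const _))).add (continuousOn_const.mul hs))
    (fun t ht => by
      have hlt : √(f t) < √(f m) := Real.sqrt_lt_sqrt
        (hfpos t (Ioo_subset_Ioc_self ht)).le
        (hmono (Ioo_subset_Icc_self ht) (right_mem_Icc.2 hpm.le) ht.2)
      have hne : √(f t) / √(f m) ≠ 1 := ((div_lt_one hsM).2 hlt).ne
      have hne' : √(f t) / √(f m) ≠ -1 := by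
        have : 0 ≤ √(f t) / √(f m) := by positivity
        linarith
      exact ((((hasDerivAt_arcsin hne' hne).comp t ((hsqrt t ht).div_const _)).const_mul A).add
        ((hsqrt t ht).const_mul k)).hasDerivWithinAt)
    ((intervalIntegrable_iff_integrableOn_Icc_of_le hpm.le).1 hint)
    (fun t ht => by
      have hft := hfpos t (Ioo_subset_Ioc_self ht)
      have hlt := hmono (Ioo_subset_Icc_self ht) (right_mem_Icc.2 hpm.le) ht.2
      have h1 : 0 < √(f t) := Real.sqrt_pos.2 hft
      have h2 : 0 < √(f m - f t) := Real.sqrt_pos.2 (sub_pos.2 hlt)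
      have h3 : √(1 - (√(f t) / √(f m)) ^ 2) = √(f m - f t) / √(f m) := by
        rw [div_pow, Real.sq_sqrt hft.le, Real.sq_sqrt hM.le, ← Real.sqrt_div' _ hM.le]
        congr 1
        field_simp
      have h4 := hA t ht
      rw [h3]
      have h5 : A * (1 / (√(f m - f t) / √(f m)) * (f' t / (2 * √(f t)) / √(f m)))
          + k * (f' t / (2 * √(f t)))
          = (A * f' t + k * f' t * √(f m - f t)) / (2 * √(f m - f t) * √(f t)) := by
        field_simp
      rw [h5, div_le_div_iff₀ (by positivity) h1]
      nlinarith)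
  simpa [hp, hsM.ne'] using key

/-- A lower bound for `∫ 1 / √f` over a positivity interval of a unimodal function `f`, obtained
from a pointwise differential inequality. -/
theorem integral_lower_bound {f f' : ℝ → ℝ} {p m q A k : ℝ} (hpm : p < m) (hmq : m < q)
    (hf : ∀ t ∈ Icc p q, HasDerivAt f (f' t) t) (hf'c : ContinuousOn f' (Icc p q))
    (hp : f p = 0) (hq : f q = 0)
    (hpos : ∀ t ∈ Ico p m, 0 < f' t) (hneg : ∀ t ∈ Ioc m q, f' t < 0)
    (hA : ∀ t ∈ Ioo p q, A * |f' t| ≤ (2 - k * f' t) * √(f m - f t)) :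
    A * π ≤ ∫ t in p..q, 1 / √(f t) := by
  obtain ⟨hi₁, hb₁⟩ := half_integral_lower_bound (f := f) (f' := f') (A := A) (k := k) hpm
    (fun t ht => hf t ⟨ht.1, ht.2.trans hmq.le⟩)
    (hf'c.mono (Icc_subset_Icc_right hmq.le)) hp hpos
    (fun t ht => by
      simpa [abs_of_pos (hpos t (Ioo_subset_Ico_self ht))] using hA t ⟨ht.1, ht.2.trans hmq⟩)
  obtain ⟨hi₂, hb₂⟩ := half_integral_lower_bound (f := fun t => f (-t)) (f' := fun t => -f' (-t))
    (A := A) (k := -k) (p := -q) (m := -m) (neg_lt_neg hmq)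
    (fun t ht => by
      have h := (hf (-t) ⟨by linarith [ht.2], by linarith [ht.1]⟩).comp t (hasDerivAt_neg t)
      simpa [Function.comp_def] using h)
    ((hf'c.comp continuousOn_neg fun t ht => ⟨by linarith [ht.2], by linarith [ht.1]⟩).neg)
    (by simpa using hq)
    (fun t ht => neg_pos.2 (hneg (-t) ⟨by linarith [ht.2], by linarith [ht.1]⟩))
    (fun t ht => by
      have h := hA (-t) ⟨by linarith [ht.2], by linarith [ht.1]⟩
      rw [abs_of_neg (hneg (-t) ⟨by linarith [ht.2], by linarith [ht.1]⟩)] at h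
      simpa using h)
  have hi₃ : IntervalIntegrable (fun t => 1 / √(f t)) volume m q := by
    rw [IntervalIntegrable.iff_comp_neg]
    exact hi₂.symm
  rw [intervalIntegral.integral_comp_neg (fun t => 1 / √(f t))] at hb₂
  simp only [neg_neg] at hb₂
  rw [← intervalIntegral.integral_add_adjacent_intervals hi₁ hi₃]
  linarith

section Potential

variable {γ w : ℝ}

theorem neg_le_sub_rpow (h₁ : 1 / 2 < γ) (h₂ : γ < 1) (hw : 0 < w) :
    -(2 * (1 - γ)) ≤ w - w ^ (2 * γ - 1) := by
  have h := rpow_one_add_le_one_add_mul_self (s := w - 1) (by linarith)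
    (p := 2 * γ - 1) (by linarith) (by linarith)
  rw [add_sub_cancel] at h
  nlinarith [mul_pos hw (sub_pos.2 h₂)]

theorem one_add_mul_sub_rpow_pos (h₁ : 1 / 2 < γ) (h₂ : γ < 1) (hw : 0 < w) :
    0 < 1 + (2 * γ - 1) / (6 * (1 - γ)) * (w - w ^ (2 * γ - 1)) := by
  have hδ : 0 < 1 - γ := sub_pos.2 h₂
  have hc : 0 ≤ (2 * γ - 1) / (6 * (1 - γ)) := div_nonneg (by linarith) (by linarith)
  have h := mul_le_mul_of_nonneg_left (neg_le_sub_rpow h₁ h₂ hw) hc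
  have h' : (2 * γ - 1) / (6 * (1 - γ)) * -(2 * (1 - γ)) = -((2 * γ - 1) / 3) := by
    field_simp
    ring
  linarith

/-- `(w - 1) (1 - w ^ (2γ - 2)) ≥ 0`, expanded. -/
theorem one_sub_rpow_le_sub_rpow (h₂ : γ < 1) (hw : 0 < w) :
    1 - w ^ (2 * γ - 2) ≤ w - w ^ (2 * γ - 1) := by
  have h : w ^ (2 * γ - 1) = w * w ^ (2 * γ - 2) := by
    rw [show 2 * γ - 2 = 2 * γ - 1 - 1 by ring, Real.rpow_sub_one hw.ne' (2 * γ - 1),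
      mul_div_cancel₀ _ hw.ne']
  rcases le_total w 1 with h1 | h1
  · have := Real.one_le_rpow_of_pos_of_le_one_of_nonpos hw h1 (by linarith : 2 * γ - 2 ≤ 0)
    nlinarith
  · have := Real.rpow_le_one_of_one_le_of_nonpos h1 (by linarith : 2 * γ - 2 ≤ 0)
    nlinarith

theorem one_sub_mul_rpow_le_cube (h₁ : 1 / 2 < γ) (h₂ : γ < 1) (hw : 0 < w) :
    1 - (2 * γ - 1) * w ^ (2 * γ - 2) ≤
      2 * (1 - γ) * (1 + (2 * γ - 1) / (6 * (1 - γ)) * (w - w ^ (2 * γ - 1))) ^ 3 := by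
  have hδ : 0 < 1 - γ := sub_pos.2 h₂
  have hB := one_add_mul_sub_rpow_pos h₁ h₂ hw
  have hv := mul_le_mul_of_nonneg_left (one_sub_rpow_le_sub_rpow h₂ hw)
    (by linarith : 0 ≤ 2 * γ - 1)
  set x := (2 * γ - 1) / (6 * (1 - γ)) * (w - w ^ (2 * γ - 1)) with hx
  have hx' : 6 * (1 - γ) * x = (2 * γ - 1) * (w - w ^ (2 * γ - 1)) := by
    rw [hx]
    field_simp
  have hcube : 1 + 3 * x ≤ (1 + x) ^ 3 := by nlinarith [mul_nonneg (sq_nonneg x) hB.le, sq_nonneg x]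
  nlinarith

/-- The pointwise inequality behind the lower bound, for the normalized potential
`w² - w^{2γ}/γ + (1-γ)/γ`. -/
theorem sq_le_mul_potential (h₁ : 1 / 2 < γ) (h₂ : γ < 1) (hw : 0 < w) :
    (w - w ^ (2 * γ - 1)) ^ 2 ≤
      2 * (1 - γ) * (1 + (2 * γ - 1) / (6 * (1 - γ)) * (w - w ^ (2 * γ - 1))) ^ 2 *
        (w ^ 2 - w ^ (2 * γ) / γ + (1 - γ) / γ) := by
  have hδ : 0 < 1 - γ := sub_pos.2 h₂
  have hγ : 0 < γ := by linarith
  set c := (2 * γ - 1) / (6 * (1 - γ)) with hc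
  set R : ℝ → ℝ := fun w => 2 * (1 - γ) * (w ^ 2 - w ^ (2 * γ) / γ + (1 - γ) / γ) -
    ((w - w ^ (2 * γ - 1)) / (1 + c * (w - w ^ (2 * γ - 1)))) ^ 2 with hR
  have hB : ∀ w : ℝ, 0 < w → 0 < 1 + c * (w - w ^ (2 * γ - 1)) :=
    fun w hw => one_add_mul_sub_rpow_pos h₁ h₂ hw
  have hder : ∀ w : ℝ, 0 < w → HasDerivAt R (2 * (w - w ^ (2 * γ - 1)) *
      ((2 * (1 - γ) * (1 + c * (w - w ^ (2 * γ - 1))) ^ 3 - (1 - (2 * γ - 1) * w ^ (2 * γ - 2)))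
        / (1 + c * (w - w ^ (2 * γ - 1))) ^ 3)) w := by
    intro w hw
    have hy : HasDerivAt (fun w : ℝ => w - w ^ (2 * γ - 1))
        (1 - (2 * γ - 1) * w ^ (2 * γ - 2)) w := by
      have h := (hasDerivAt_id w).sub (Real.hasDerivAt_rpow_const (p := 2 * γ - 1) (Or.inl hw.ne'))
      rw [show 2 * γ - 1 - 1 = 2 * γ - 2 by ring] at h
      exact h
    have hV := (((hasDerivAt_pow 2 w).sub ((Real.hasDerivAt_rpow_const (p := 2 * γ)
      (Or.inl hw.ne')).div_const γ)).add_const ((1 - γ) / γ)).const_mul (2 * (1 - γ))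
    have hB' := hB w hw
    have h := hV.sub ((hy.div ((hy.const_mul c).const_add 1) hB'.ne').pow 2)
    refine h.congr_deriv ?_
    simp only [Nat.cast_ofNat, Nat.add_one_sub_one, pow_one, Pi.div_apply]
    generalize w ^ (2 * γ - 1) = u at hB' ⊢
    generalize 1 - (2 * γ - 1) * w ^ (2 * γ - 2) = d
    rw [show d * (1 + c * (w - u)) - (w - u) * (c * d) = d by ring]
    generalize 1 + c * (w - u) = b at hB' ⊢
    field_simp
  have hsgn : ∀ w : ℝ, 0 < w →
      0 ≤ (2 * (1 - γ) * (1 + c * (w - w ^ (2 * γ - 1))) ^ 3 -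
        (1 - (2 * γ - 1) * w ^ (2 * γ - 2))) / (1 + c * (w - w ^ (2 * γ - 1))) ^ 3 :=
    fun w hw => div_nonneg (sub_nonneg.2 (one_sub_mul_rpow_le_cube h₁ h₂ hw))
      (pow_pos (hB w hw) 3).le
  have hR1 : R 1 = 0 := by
    simp only [hR, Real.one_rpow]
    field_simp
    ring
  have hRw : 0 ≤ R w := by
    rw [← hR1]
    rcases le_total w 1 with h | h
    · refine antitoneOn_of_deriv_nonpos (convex_Icc w 1)
        (fun t ht => (hder t (hw.trans_le ht.1)).continuousAt.continuousWithinAt)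
        (fun t ht => ?_) (fun t ht => ?_) (left_mem_Icc.2 h) (right_mem_Icc.2 h) h
      · rw [interior_Icc] at ht
        exact (hder t (hw.trans ht.1)).differentiableAt.differentiableWithinAt
      · rw [interior_Icc] at ht
        have ht0 := hw.trans ht.1
        rw [(hder t ht0).deriv]
        have : t ≤ t ^ (2 * γ - 1) := by
          simpa using Real.rpow_le_rpow_of_exponent_ge ht0 ht.2.le (by linarith : 2 * γ - 1 ≤ 1)
        exact mul_nonpos_of_nonpos_of_nonneg (by linarith) (hsgn t ht0)
    · refine monotoneOn_of_deriv_nonneg (convex_Icc 1 w)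
        (fun t ht => (hder t (one_pos.trans_le ht.1)).continuousAt.continuousWithinAt)
        (fun t ht => ?_) (fun t ht => ?_) (left_mem_Icc.2 h) (right_mem_Icc.2 h) h
      · rw [interior_Icc] at ht
        exact (hder t (one_pos.trans ht.1)).differentiableAt.differentiableWithinAt
      · rw [interior_Icc] at ht
        have ht0 := one_pos.trans ht.1
        rw [(hder t ht0).deriv]
        have : t ^ (2 * γ - 1) ≤ t := by
          simpa using Real.rpow_le_rpow_of_exponent_le ht.1.le (by linarith : 2 * γ - 1 ≤ 1)
        exact mul_nonneg (by linarith) (hsgn t ht0)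
  have hBw := hB w hw
  rw [hR, sub_nonneg, div_pow, div_le_iff₀ (by positivity)] at hRw
  linarith

end Potential

theorem hasDerivAt_fA (γ α : ℝ) {t : ℝ} (ht : 0 < t) : HasDerivAt (fA γ α) (fA' γ α t) t := by
  have h := (((Real.hasDerivAt_rpow_const (p := 2 * γ) (Or.inl ht.ne')).const_mul α).sub
    (hasDerivAt_pow 2 t)).sub_const 1
  refine h.congr_deriv ?_
  simp only [fA', Nat.cast_ofNat, Nat.add_one_sub_one, pow_one]
  ring

theorem continuous_fA {γ : ℝ} (hγ : 0 ≤ γ) (α : ℝ) : Continuous (fA γ α) :=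
  ((continuous_const.mul (Real.continuous_rpow_const (by linarith))).sub
    (continuous_pow 2)).sub continuous_const

theorem continuous_fA' {γ : ℝ} (hγ : 1 / 2 ≤ γ) (α : ℝ) : Continuous (fA' γ α) :=
  (continuous_const.mul (Real.continuous_rpow_const (by linarith))).sub
    (continuous_const.mul continuous_id)

/-- If `f_α` increases up to `m`, decreases afterwards and is positive at `m`, then
`ω⁻_α < m < ω⁺_α` are zeros of `f_α`. -/
theorem omega_spec {γ α m : ℝ} (hγ : 0 < γ) (h₂ : γ < 1) (hα : 0 < α) (hm : 0 < m)
    (hpos : ∀ t ∈ Ioo 0 m, 0 < fA' γ α t) (hneg : ∀ t ∈ Ioi m, fA' γ α t < 0)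
    (hM : 0 < fA γ α m) :
    0 < omegaMinus γ α ∧ omegaMinus γ α < m ∧ m < omegaPlus γ α ∧
      fA γ α (omegaMinus γ α) = 0 ∧ fA γ α (omegaPlus γ α) = 0 := by
  have hcont := continuous_fA hγ.le α
  have hmono : StrictMonoOn (fA γ α) (Icc 0 m) := by
    refine strictMonoOn_of_deriv_pos (convex_Icc 0 m) hcont.continuousOn fun t ht => ?_
    rw [interior_Icc] at ht
    rw [(hasDerivAt_fA γ α ht.1).deriv]
    exact hpos t ht
  have hanti : StrictAntiOn (fA γ α) (Ici m) := by
    refine strictAntiOn_of_deriv_neg (convex_Ici m) hcont.continuousOn fun t ht => ?_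
    rw [interior_Ici] at ht
    rw [(hasDerivAt_fA γ α (hm.trans ht)).deriv]
    exact hneg t ht
  obtain ⟨p, hp, hfp⟩ : ∃ p ∈ Ioo 0 m, fA γ α p = 0 := by
    refine intermediate_value_Ioo hm.le hcont.continuousOn ⟨?_, hM⟩
    simp [fA, Real.zero_rpow (mul_pos two_pos hγ).ne']
  obtain ⟨q, hq, hfq⟩ : ∃ q, m < q ∧ fA γ α q = 0 := by
    set T := max m (α ^ (2 - 2 * γ)⁻¹)
    have hmT : m ≤ T := le_max_left _ _
    have hT0 : 0 < T := hm.trans_le hmT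
    have hαT : α ≤ T ^ (2 - 2 * γ) := by
      have h := Real.rpow_le_rpow (by positivity) (le_max_right m (α ^ (2 - 2 * γ)⁻¹))
        (by linarith : 0 ≤ 2 - 2 * γ)
      rwa [Real.rpow_inv_rpow hα.le (by linarith)] at h
    have hsq : T ^ (2 - 2 * γ) * T ^ (2 * γ) = T ^ 2 := by
      rw [← Real.rpow_add hT0, sub_add_cancel, Real.rpow_two]
    have hfT : fA γ α T < 0 := by
      have := mul_le_mul_of_nonneg_right hαT (by positivity : 0 ≤ T ^ (2 * γ))
      simp only [fA]
      linarith
    obtain ⟨q, hq, hfq⟩ := intermediate_value_Ioo' hmT hcont.continuousOn ⟨hfT, hM⟩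
    exact ⟨q, hq.1, hfq⟩
  have hS : {t : ℝ | 0 < t ∧ 0 < fA γ α t} = Ioo p q := by
    ext t
    simp only [mem_ofPred_eq, mem_Ioo]
    rcases le_total t m with h | h
    · refine ⟨fun ⟨h0, ht⟩ => ⟨?_, h.trans_lt hq⟩, fun ⟨h1, _⟩ => ⟨hp.1.trans h1, ?_⟩⟩
      · rw [← hfp] at ht
        exact (hmono.lt_iff_lt ⟨hp.1.le, hp.2.le⟩ ⟨h0.le, h⟩).1 ht
      · rw [← hfp]
        exact hmono ⟨hp.1.le, hp.2.le⟩ ⟨(hp.1.trans h1).le, h⟩ h1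
    · refine ⟨fun ⟨h0, ht⟩ => ⟨hp.2.trans_le h, ?_⟩, fun ⟨_, h1⟩ => ⟨hm.trans_le h, ?_⟩⟩
      · rw [← hfq] at ht
        exact (hanti.lt_iff_gt (mem_Ici.2 hq.le) h).1 ht
      · rw [← hfq]
        exact hanti h hq.le h1
  have hpq : p < q := hp.2.trans hq
  rw [omegaMinus, omegaPlus, hS, csInf_Ioo hpq, csSup_Ioo hpq]
  exact ⟨hp.1, hp.2, hq, hfp, hfq⟩

section Scaling

variable {γ α m w : ℝ}

theorem fA_mul_eq (hγ : γ ≠ 0) (hm : 0 < m) (hw : 0 < w) (hmα : α * γ * m ^ (2 * γ) = m ^ 2) :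
    fA γ α (m * w) = m ^ 2 * (w ^ (2 * γ) / γ - w ^ 2) - 1 := by
  rw [fA, Real.mul_rpow hm.le hw.le, ← hmα]
  have : (m * w) ^ 2 = α * γ * m ^ (2 * γ) * w ^ 2 := by rw [mul_pow, hmα]
  rw [this]
  field_simp

theorem fA'_mul_eq (hm : 0 < m) (hw : 0 < w) (hmα : α * γ * m ^ (2 * γ) = m ^ 2) :
    fA' γ α (m * w) = 2 * m * (w ^ (2 * γ - 1) - w) := by
  rw [fA', Real.mul_rpow hm.le hw.le, Real.rpow_sub_one hm.ne']
  have : α * γ * (m ^ (2 * γ) / m) = m := by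
    rw [← mul_div_assoc, hmα]
    field_simp
  linear_combination 2 * w ^ (2 * γ - 1) * this

end Scaling

/-- For every `γ ∈ (1/2, 1)`, the function `I₀` is bounded below by its limit
`π / √(2(1-γ))` at the critical value of `α`. -/
theorem pi_div_sqrt_le_I0 {γ α : ℝ} (h₁ : 1 / 2 < γ) (h₂ : γ < 1)
    (hα : γ ^ (-γ) * (1 - γ) ^ (γ - 1) < α) : π / √(2 * (1 - γ)) ≤ I0 γ α := by
  have hγ : 0 < γ := by linarith
  have hδ : 0 < 1 - γ := sub_pos.2 h₂
  have hα0 : 0 < α := lt_trans (by positivity) hα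
  set m := (α * γ) ^ (2 - 2 * γ)⁻¹
  have hm : 0 < m := by positivity
  have hmpow : m ^ (2 - 2 * γ) = α * γ := Real.rpow_inv_rpow (by positivity) (by linarith)
  have hmα : α * γ * m ^ (2 * γ) = m ^ 2 := by
    rw [← hmpow, ← Real.rpow_add hm, sub_add_cancel, Real.rpow_two]
  have hmsq : γ / (1 - γ) < m ^ 2 := by
    rw [← Real.rpow_lt_rpow_iff (by positivity) (by positivity) hδ, ← Real.rpow_natCast,
      ← Real.rpow_mul hm.le, Nat.cast_ofNat, mul_one_sub, hmpow, Real.div_rpow hγ.le hδ.le]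
    have h := mul_lt_mul_of_pos_right hα hγ
    rw [show γ - 1 = -(1 - γ) by ring, Real.rpow_neg hδ.le] at h
    calc γ ^ (1 - γ) / (1 - γ) ^ (1 - γ) = γ ^ (-γ) * ((1 - γ) ^ (1 - γ))⁻¹ * γ := by
          rw [show 1 - γ = -γ + 1 by ring, Real.rpow_add_one hγ.ne']
          ring
      _ < α * γ := h
  have hfm : fA γ α m = m ^ 2 * (1 / γ - 1) - 1 := by
    simpa using fA_mul_eq hγ.ne' hm one_pos hmα
  have hM : 0 < fA γ α m := by
    rw [div_lt_iff₀ hδ] at hmsq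
    rw [hfm, show m ^ 2 * (1 / γ - 1) - 1 = (m ^ 2 * (1 - γ) - γ) / γ by field_simp]
    exact div_pos (by linarith) hγ
  have hpos : ∀ t ∈ Ioo 0 m, 0 < fA' γ α t := fun t ht => by
    have hw : 0 < t / m := div_pos ht.1 hm
    have h := fA'_mul_eq hm hw hmα
    rw [mul_div_cancel₀ _ hm.ne'] at h
    rw [h]
    have := Real.rpow_lt_rpow_of_exponent_gt hw ((div_lt_one hm).2 ht.2)
      (by linarith : 2 * γ - 1 < 1)
    rw [Real.rpow_one] at this
    exact mul_pos (by positivity) (sub_pos.2 this)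
  have hneg : ∀ t ∈ Ioi m, fA' γ α t < 0 := fun t ht => by
    have hw : 0 < t / m := div_pos (hm.trans ht) hm
    have h := fA'_mul_eq hm hw hmα
    rw [mul_div_cancel₀ _ hm.ne'] at h
    rw [h]
    have := Real.rpow_lt_rpow_of_exponent_lt ((one_lt_div hm).2 ht) (by linarith : 2 * γ - 1 < 1)
    rw [Real.rpow_one] at this
    exact mul_neg_of_pos_of_neg (by positivity) (sub_neg.2 this)
  obtain ⟨hp0, hpm, hmq, hfp, hfq⟩ := omega_spec hγ h₂ hα0 hm hpos hneg hM
  have key := integral_lower_bound (f := fA γ α) (f' := fA' γ α) (A := (√(2 * (1 - γ)))⁻¹)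
    (k := (2 * γ - 1) / (6 * (1 - γ)) / m) hpm hmq
    (fun t ht => hasDerivAt_fA γ α (hp0.trans_le ht.1))
    (continuous_fA' h₁.le α).continuousOn hfp hfq
    (fun t ht => hpos t ⟨hp0.trans_le ht.1, ht.2⟩) (fun t ht => hneg t ht.1)
    (fun t ht => by
      have hw : 0 < t / m := div_pos (hp0.trans ht.1) hm
      obtain ⟨w, rfl⟩ : ∃ w, t = m * w := ⟨t / m, (mul_div_cancel₀ _ hm.ne').symm⟩
      rw [mul_div_cancel_left₀ _ hm.ne'] at hw
      have hB := one_add_mul_sub_rpow_pos h₁ h₂ hw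
      have hV := Real.abs_le_sqrt (sq_le_mul_potential h₁ h₂ hw)
      rw [mul_assoc, Real.sqrt_mul (mul_nonneg two_pos.le hδ.le), Real.sqrt_mul (sq_nonneg _),
        Real.sqrt_sq hB.le] at hV
      have hdiff : fA γ α m - fA γ α (m * w) =
          m ^ 2 * (w ^ 2 - w ^ (2 * γ) / γ + (1 - γ) / γ) := by
        rw [hfm, fA_mul_eq hγ.ne' hm hw hmα]
        field_simp
        ring
      rw [hdiff, fA'_mul_eq hm hw hmα, Real.sqrt_mul (sq_nonneg m), Real.sqrt_sq hm.le, abs_mul,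
        abs_of_pos (by positivity : 0 < 2 * m), abs_sub_comm, inv_mul_le_iff₀ (by positivity)]
      refine (mul_le_mul_of_nonneg_left hV (by positivity)).trans_eq ?_
      generalize √(2 * (1 - γ)) = r
      generalize √(w ^ 2 - w ^ (2 * γ) / γ + (1 - γ) / γ) = s
      field_simp
      ring)
  rwa [inv_mul_eq_div] at key

/-- For `γ = 1 − 2π⁻²`, the function `I₀` cannot take values smaller than
`(1−γ)⁻¹`. -/
theorem I0_lower_bound (γ : ℝ) (hγ : γ = 1 - 2 / π ^ 2) :
    ∀ α : ℝ, γ ^ (-γ) * (1 - γ) ^ (γ - 1) < α → (1 - γ)⁻¹ ≤ I0 γ α := by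
  intro α hα
  have hπ : 0 < π := Real.pi_pos
  have hπ4 : 4 < π ^ 2 := by nlinarith [Real.pi_gt_three]
  have h₁ : 1 / 2 < γ := by
    have : 2 / π ^ 2 < 1 / 2 := by
      rw [div_lt_div_iff₀ (by positivity) two_pos]
      linarith
    linarith
  have h₂ : γ < 1 := by
    have : 0 < 2 / π ^ 2 := by positivity
    linarith
  refine le_trans (le_of_eq ?_) (pi_div_sqrt_le_I0 h₁ h₂ hα)
  have hsqrt : √(2 * (1 - γ)) = 2 / π := by
    rw [hγ, show 2 * (1 - (1 - 2 / π ^ 2)) = (2 / π) ^ 2 by ring, Real.sqrt_sq (by positivity)]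
  rw [hsqrt, hγ]
  field_simp
  ring
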